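/- Let G be a simple graph on Fin N, K > 0, ω : Fin N → ℝ, and let θ : Fin N → ℝ be a completely degenerate equilibrium of the non-identical Kuramoto system with coupling K and frequencies ω. Let k be a vertex, let a be the number of neighbors j of k with θ j ≡ θ k + π/2 (mod 2π) and b the number of neighbors j of k with θ j ≡ θ k − π/2 (mod 2π). For x ∈ ℝ define θ^x by θ^x_k = θ k + x and θ^x_j = θ j for j ≠ k. Then for every x, E(θ) − E(θ^x) = ω k · x + K·(a − b)·sin(x), where E(φ) = −∑_h ω h · φ h + K·(1/2)·∑_{p,q} a(p,q)·(1 − cos(φ p − φ q)). -/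

import Mathlib

open Real

open Classical in
/-- Adjacency indicator: `1` if `j` and `k` are adjacent in `G`, `0` otherwise. -/
noncomputable def adjInd {V : Type*} (G : SimpleGraph V) (j k : V) : ℝ :=
  if G.Adj j k then 1 else 0

/-- A completely degenerate equilibrium of the identical Kuramoto system on `G`. -/
def IsCDE {V : Type*} [Fintype V] (G : SimpleGraph V) (θ : V → ℝ) : Prop :=
  (∀ k, ∑ j, adjInd G j k * Real.sin (θ j - θ k) = 0) ∧
  (∀ j k, G.Adj j k → Real.cos (θ j - θ k) = 0)

/-- A completely degenerate equilibrium of the non-identical Kuramoto system with coupling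
`K` and intrinsic frequencies `ω`. -/
def IsCDENonId {N : ℕ} (G : SimpleGraph (Fin N)) (K : ℝ) (ω θ : Fin N → ℝ) : Prop :=
  (∀ k, ω k + K * ∑ j, adjInd G j k * Real.sin (θ j - θ k) = 0) ∧
  (∀ j k, G.Adj j k → Real.cos (θ j - θ k) = 0)

/-- The energy of the non-identical Kuramoto system (double sum over ordered pairs,
halved). -/
noncomputable def energyNonId {N : ℕ} (G : SimpleGraph (Fin N)) (K : ℝ) (ω : Fin N → ℝ)
    (φ : Fin N → ℝ) : ℝ :=
  - ∑ h, ω h * φ h + K * ((1 / 2) * ∑ p, ∑ q, adjInd G p q * (1 - Real.cos (φ p - φ q)))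

open Classical in
theorem adjInd_sin_split {N : ℕ} (G : SimpleGraph (Fin N)) (K : ℝ)
    (ω θ : Fin N → ℝ) (hθ : IsCDENonId G K ω θ) (k j : Fin N) :
    adjInd G j k * Real.sin (θ j - θ k) =
      (if G.Adj j k ∧ ∃ m : ℤ, θ j = θ k + π / 2 + 2 * π * m then (1 : ℝ) else 0) -
      (if G.Adj j k ∧ ∃ m : ℤ, θ j = θ k - π / 2 + 2 * π * m then (1 : ℝ) else 0) := by
  by_cases h : G.Adj j k
  · have hc := hθ.2 j k h
    have hA : (∃ m : ℤ, θ j = θ k + π / 2 + 2 * π * m) ↔ Real.sin (θ j - θ k) = 1 := by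
      rw [Real.sin_eq_one_iff]
      constructor
      · rintro ⟨m, hm⟩
        exact ⟨m, by rw [hm]; ring⟩
      · rintro ⟨m, hm⟩
        exact ⟨m, by linarith⟩
    have hB : (∃ m : ℤ, θ j = θ k - π / 2 + 2 * π * m) ↔ Real.sin (θ j - θ k) = -1 := by
      rw [Real.sin_eq_neg_one_iff]
      constructor
      · rintro ⟨m, hm⟩
        exact ⟨m, by rw [hm]; ring⟩
      · rintro ⟨m, hm⟩
        exact ⟨m, by linarith⟩
    rw [hA, hB]
    rcases Real.cos_eq_zero_iff_sin_eq.1 hc with h1 | h1 <;> rw [h1] <;> norm_num [adjInd, h]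
  · simp [adjInd, h]

theorem ncard_diff_eq {N : ℕ} (G : SimpleGraph (Fin N)) (K : ℝ)
    (ω θ : Fin N → ℝ) (hθ : IsCDENonId G K ω θ) (k : Fin N) :
    ((({j | G.Adj j k ∧ ∃ m : ℤ, θ j = θ k + π / 2 + 2 * π * m} :
                Set (Fin N)).ncard : ℝ) -
            (({j | G.Adj j k ∧ ∃ m : ℤ, θ j = θ k - π / 2 + 2 * π * m} :
                Set (Fin N)).ncard : ℝ)) = ∑ j, adjInd G j k * Real.sin (θ j - θ k) := by
  classical
  simp_rw [adjInd_sin_split G K ω θ hθ k]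
  rw [Finset.sum_sub_distrib, Finset.sum_boole, Finset.sum_boole,
    Set.ncard_eq_toFinset_card', Set.ncard_eq_toFinset_card']
  simp only [Set.toFinset_setOf]

theorem pair_term {N : ℕ} (G : SimpleGraph (Fin N)) (K : ℝ)
    (ω θ : Fin N → ℝ) (hθ : IsCDENonId G K ω θ) (k : Fin N) (x : ℝ) (p q : Fin N) :
    adjInd G p q * (1 - Real.cos (θ p - θ q)) -
      adjInd G p q * (1 - Real.cos ((if p = k then θ k + x else θ p) -
        (if q = k then θ k + x else θ q))) =
      (if p = k then adjInd G q k * Real.sin (θ q - θ k) * Real.sin x else 0) +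
      (if q = k then adjInd G p k * Real.sin (θ p - θ k) * Real.sin x else 0) := by
  have key : ∀ j, G.Adj j k → Real.cos (θ j - (θ k + x)) = Real.sin (θ j - θ k) * Real.sin x := by
    intro j h
    rw [show θ j - (θ k + x) = (θ j - θ k) - x by ring, Real.cos_sub, hθ.2 j k h]
    ring
  by_cases hp : p = k
  · by_cases hq : q = k
    · subst hp; subst hq; simp
    · subst hp
      by_cases h : G.Adj q p
      · have h' := h.symm
        have e : Real.cos (θ p + x - θ q) = Real.cos (θ q - (θ p + x)) := by
          rw [← Real.cos_neg]; congr 1; ring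
        simp [hq, adjInd, h, h', e, key q h, hθ.2 p q h']
      · have h' : ¬ G.Adj p q := fun h' => h h'.symm
        simp [hq, adjInd, h, h']
  · by_cases hq : q = k
    · subst hq
      by_cases h : G.Adj p q
      · simp [hp, adjInd, h, key p h, hθ.2 p q h]
      · simp [hp, adjInd, h]
    · simp [hp, hq]

/-- for a completely degenerate equilibrium `θ` of the non-identical system,
a vertex `k` with `a` neighbors at phase `θ k + π/2 (mod 2π)` and `b` neighbors at phase
`θ k − π/2 (mod 2π)`, perturbing `θ k` by `+x` changes the energy by
`E(θ) − E(θ^x) = ω k · x + K·(a − b)·sin x`. -/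
theorem stmt16 {N : ℕ} (G : SimpleGraph (Fin N)) (K : ℝ) (hK : 0 < K)
    (ω θ : Fin N → ℝ) (hθ : IsCDENonId G K ω θ) (k : Fin N) (x : ℝ) :
    energyNonId G K ω θ - energyNonId G K ω (fun j => if j = k then θ k + x else θ j) =
      ω k * x +
        K * ((({j | G.Adj j k ∧ ∃ m : ℤ, θ j = θ k + π / 2 + 2 * π * m} :
                Set (Fin N)).ncard : ℝ) -
            (({j | G.Adj j k ∧ ∃ m : ℤ, θ j = θ k - π / 2 + 2 * π * m} :
                Set (Fin N)).ncard : ℝ)) * Real.sin x := by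
  rw [ncard_diff_eq G K ω θ hθ k]
  have h1 : ∑ h, ω h * (if h = k then θ k + x else θ h) - ∑ h, ω h * θ h = ω k * x := by
    rw [← Finset.sum_sub_distrib, Finset.sum_eq_single k]
    · simp; ring
    · intro b _ hb
      simp [hb]
    · simp
  have h2 : (∑ p, ∑ q, adjInd G p q * (1 - Real.cos (θ p - θ q))) -
      (∑ p, ∑ q, adjInd G p q * (1 - Real.cos ((if p = k then θ k + x else θ p) -
        (if q = k then θ k + x else θ q)))) =
      2 * ((∑ j, adjInd G j k * Real.sin (θ j - θ k)) * Real.sin x) := by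
    simp_rw [← Finset.sum_sub_distrib, pair_term G K ω θ hθ k x, Finset.sum_add_distrib]
    rw [Finset.sum_comm]
    simp only [Finset.sum_ite_eq', Finset.mem_univ, if_true, ← Finset.sum_mul]
    ring
  unfold energyNonId
  linear_combination h1 + K / 2 * h2
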